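/- arXiv:2308.04166 — 2 statements merged into one kernel-verified Lean document; each statement's English description precedes it below -/
import Mathlib

section
/- Let n be a positive natural number and let X be a random variable with the chi-square distribution with n degrees of freedom (i.e., the Gamma distribution with shape n/2 and rate 1/2). Then for every a ≥ 0, ℙ[X − n ≥ 2√(n·a) + 2a] ≤ e^{−a}. -/
/-!
Exponential tilting computes the moment-generating function of `Gamma(k, r)`: the factor `exp (t x)`
turns its density into `(1 - t / r) ^ (-k)` times that of `Gamma(k, r - t)`. The bound
`-log (1 - x) ≤ x + x² / (2 (1 - x))` then says that the centred variable is sub-gamma with variance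
factor `k / r²` and scale `1 / r`. Optimizing the Chernoff bound for sub-gamma variables gives the
tail `P(X - k / r ≥ √(2 k a) / r + a / r) ≤ exp (-a)`, which for `k = n / 2` and `r = 1 / 2` is the
chi-square bound.
-/

open MeasureTheory ProbabilityTheory Real

/-- The right-tail sub-gamma condition with variance factor `v` and scale `c`, in the sense of
Boucheron, Lugosi and Massart: the sub-Gaussian bound on the moment-generating function of `X`
with `v` enlarged to `v / (1 - c * t)`, for `0 ≤ t < 1 / c`. Writing the range of `t` as `c * t < 1`
makes `c = 0` the case without an upper limit on `t`. -/
structure HasSubgammaMGF {Ω : Type*} {mΩ : MeasurableSpace Ω} (X : Ω → ℝ) (v c : ℝ)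
    (μ : Measure Ω) : Prop where
  integrable_exp_mul : ∀ t, 0 ≤ t → c * t < 1 → Integrable (fun ω ↦ exp (t * X ω)) μ
  mgf_le : ∀ t, 0 ≤ t → c * t < 1 → mgf X μ t ≤ exp (v * t ^ 2 / (2 * (1 - c * t)))

namespace HasSubgammaMGF

variable {Ω : Type*} {mΩ : MeasurableSpace Ω} {μ : Measure Ω} {X : Ω → ℝ} {v c : ℝ}

lemma of_map {Ω' : Type*} {mΩ' : MeasurableSpace Ω'} {μ : Measure Ω'} {Y : Ω' → Ω}
    (hY : AEMeasurable Y μ) (h : HasSubgammaMGF X v c (μ.map Y)) :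
    HasSubgammaMGF (X ∘ Y) v c μ where
  integrable_exp_mul t ht hct := (h.integrable_exp_mul t ht hct).comp_aemeasurable hY
  mgf_le t ht hct := by
    rw [← mgf_map hY (h.integrable_exp_mul t ht hct).aestronglyMeasurable]
    exact h.mgf_le t ht hct

lemma isFiniteMeasure (h : HasSubgammaMGF X v c μ) : IsFiniteMeasure μ := by
  have h_one : Integrable (fun _ ↦ (1 : ℝ)) μ := by
    simpa only [zero_mul, exp_zero] using h.integrable_exp_mul 0 le_rfl (by simp)
  exact (integrable_const_iff_isFiniteMeasure one_ne_zero).1 h_one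

lemma measure_ge_le (h : HasSubgammaMGF X v c μ) (hv : 0 < v) (hc : 0 ≤ c) {a : ℝ}
    (ha : 0 ≤ a) : μ.real {ω | √(2 * v * a) + c * a ≤ X ω} ≤ exp (-a) := by
  have := h.isFiniteMeasure
  set w := √(2 * v * a)
  have hw : 0 ≤ w := sqrt_nonneg _
  have hw_sq : w ^ 2 = 2 * v * a := sq_sqrt (by positivity)
  have : 0 < v + c * w := by positivity
  -- This `t` minimizes the Chernoff exponent `-t * (w + c * a) + v * t ^ 2 / (2 * (1 - c * t))`.
  set t := w / (v + c * w) with ht_def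
  have ht : 0 ≤ t := by positivity
  have h_one_sub : 1 - c * t = v / (v + c * w) := by
    rw [ht_def]
    field
  have hct : c * t < 1 := sub_pos.1 (h_one_sub ▸ by positivity)
  have h_exponent : -t * (w + c * a) + v * t ^ 2 / (2 * (1 - c * t)) = -a := by
    rw [h_one_sub, ht_def]
    field_simp
    linear_combination -hw_sq
  calc μ.real {ω | w + c * a ≤ X ω}
      ≤ exp (-t * (w + c * a)) * mgf X μ t :=
        measure_ge_le_exp_mul_mgf _ ht (h.integrable_exp_mul t ht hct)
    _ ≤ exp (-t * (w + c * a)) * exp (v * t ^ 2 / (2 * (1 - c * t))) := by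
        gcongr
        exact h.mgf_le t ht hct
    _ = exp (-a) := by rw [← exp_add, h_exponent]

end HasSubgammaMGF

lemma log_le_half_sub_inv {z : ℝ} (hz : 1 ≤ z) : log z ≤ (z - z⁻¹) / 2 := by
  rw [← sinh_log (by positivity)]
  exact self_le_sinh_iff.2 (log_nonneg hz)

lemma neg_log_one_sub_le {x : ℝ} (hx₀ : 0 ≤ x) (hx₁ : x < 1) :
    -log (1 - x) ≤ x + x ^ 2 / (2 * (1 - x)) := by
  have hpos : 0 < 1 - x := sub_pos.2 hx₁
  calc -log (1 - x) = log (1 - x)⁻¹ := (log_inv _).symm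
    _ ≤ ((1 - x)⁻¹ - (1 - x)⁻¹⁻¹) / 2 :=
        log_le_half_sub_inv ((one_le_inv₀ hpos).2 (by linarith))
    _ = x + x ^ 2 / (2 * (1 - x)) := by
        field_simp
        ring

section Gamma

variable {k r t : ℝ}

lemma gammaPDF_mul_exp (hr : 0 < r) (ht : t < r) (x : ℝ) :
    gammaPDF k r x * ENNReal.ofReal (exp (t * x)) =
      ENNReal.ofReal ((1 - t / r) ^ (-k)) * gammaPDF k (r - t) x := by
  rcases lt_or_ge x 0 with hx | hx
  · simp only [gammaPDF_of_neg hx, zero_mul, mul_zero]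
  have hpos : 0 < 1 - t / r := sub_pos.2 ((div_lt_one hr).2 ht)
  have h_rate : r ^ k = (1 - t / r) ^ (-k) * (r - t) ^ k := by
    rw [show r - t = (1 - t / r) * r by field, mul_rpow hpos.le hr.le, ← mul_assoc,
      ← rpow_add hpos, neg_add_cancel, rpow_zero, one_mul]
  have h_exp : exp (-((r - t) * x)) = exp (-(r * x)) * exp (t * x) := by
    rw [← exp_add]
    ring_nf
  rw [gammaPDF_of_nonneg hx, gammaPDF_of_nonneg hx, ← ENNReal.ofReal_mul' (by positivity),
    ← ENNReal.ofReal_mul (by positivity), h_rate, h_exp]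
  ring_nf

lemma lintegral_exp_mul_gammaMeasure (hk : 0 < k) (hr : 0 < r) (ht : t < r) :
    ∫⁻ x, ENNReal.ofReal (exp (t * x)) ∂gammaMeasure k r =
      ENNReal.ofReal ((1 - t / r) ^ (-k)) := by
  have h_meas : Measurable (gammaPDF k r) := (measurable_gammaPDFReal k r).ennreal_ofReal
  rw [gammaMeasure, lintegral_withDensity_eq_lintegral_mul _ h_meas (by fun_prop)]
  simp only [Pi.mul_apply, gammaPDF_mul_exp hr ht]
  rw [lintegral_const_mul' _ _ ENNReal.ofReal_ne_top,
    lintegral_gammaPDF_eq_one hk (sub_pos.2 ht), mul_one]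

lemma mgf_id_gammaMeasure (hk : 0 < k) (hr : 0 < r) (ht : t < r) :
    mgf id (gammaMeasure k r) t = (1 - t / r) ^ (-k) := by
  have hpos : 0 < 1 - t / r := sub_pos.2 ((div_lt_one hr).2 ht)
  simp only [mgf, id_eq]
  rw [integral_eq_lintegral_of_nonneg_ae (ae_of_all _ fun _ ↦ (exp_pos _).le)
    (by fun_prop), lintegral_exp_mul_gammaMeasure hk hr ht, ENNReal.toReal_ofReal (by positivity)]

lemma mgf_sub_mean_gammaMeasure (hk : 0 < k) (hr : 0 < r) (ht : t < r) :
    mgf (fun x ↦ x - k / r) (gammaMeasure k r) t =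
      exp (k * (-log (1 - t / r) - t / r)) := by
  have hpos : 0 < 1 - t / r := sub_pos.2 ((div_lt_one hr).2 ht)
  simp only [sub_eq_add_neg _ (k / r)]
  rw [mgf_add_const, ← Function.id_def, mgf_id_gammaMeasure hk hr ht, rpow_def_of_pos hpos,
    ← exp_add]
  ring_nf

lemma hasSubgammaMGF_gammaMeasure (hk : 0 < k) (hr : 0 < r) :
    HasSubgammaMGF (fun x ↦ x - k / r) (k / r ^ 2) r⁻¹ (gammaMeasure k r) where
  integrable_exp_mul t _ hct := by
    have := isProbabilityMeasure_gammaMeasure hk hr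
    rw [← mgf_pos_iff, mgf_sub_mean_gammaMeasure hk hr ((inv_mul_lt_one₀ hr).1 hct)]
    exact exp_pos _
  mgf_le t ht hct := by
    rw [mgf_sub_mean_gammaMeasure hk hr ((inv_mul_lt_one₀ hr).1 hct), exp_le_exp]
    rw [inv_mul_eq_div] at hct ⊢
    calc k * (-log (1 - t / r) - t / r)
        ≤ k * ((t / r) ^ 2 / (2 * (1 - t / r))) := by
          gcongr
          linarith [neg_log_one_sub_le (div_nonneg ht hr.le) hct]
      _ = k / r ^ 2 * t ^ 2 / (2 * (1 - t / r)) := by ring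

end Gamma

theorem chi_square_tail_bound_general {Ω : Type*} {mΩ : MeasurableSpace Ω} {μ : Measure Ω}
    {X : Ω → ℝ} {k r : ℝ} (hk : 0 < k) (hr : 0 < r) (hX : μ.map X = gammaMeasure k r)
    {a : ℝ} (ha : 0 ≤ a) :
    μ {ω | (√(2 * k * a) + a) / r ≤ X ω - k / r} ≤ ENNReal.ofReal (exp (-a)) := by
  have := isProbabilityMeasure_gammaMeasure hk hr
  have hX_meas : AEMeasurable X μ := aemeasurable_of_map_neZero (hX ▸ inferInstance)
  have h_sub : HasSubgammaMGF (fun ω ↦ X ω - k / r) (k / r ^ 2) r⁻¹ μ :=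
    .of_map (X := fun x ↦ x - k / r) hX_meas (hX ▸ hasSubgammaMGF_gammaMeasure hk hr)
  have := h_sub.isFiniteMeasure
  have h_threshold : √(2 * (k / r ^ 2) * a) + r⁻¹ * a = (√(2 * k * a) + a) / r := by
    rw [show 2 * (k / r ^ 2) * a = 2 * k * a / r ^ 2 by ring, sqrt_div (by positivity),
      sqrt_sq hr.le]
    ring
  rw [ENNReal.le_ofReal_iff_toReal_le (measure_ne_top _ _) (exp_pos _).le, ← h_threshold]
  exact h_sub.measure_ge_le (by positivity) (by positivity) ha

/-- Laurent–Massart tail bound for the chi-square distribution with `n` degrees of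
freedom (the Gamma distribution with shape `n/2` and rate `1/2`):
`ℙ[X − n ≥ 2√(n·a) + 2a] ≤ e^{−a}` for every `a ≥ 0`. -/
theorem chi_square_tail_bound (n : ℕ) (hn : 0 < n)
    {Ω : Type*} [MeasureSpace Ω] [IsProbabilityMeasure (ℙ : Measure Ω)]
    (X : Ω → ℝ) (hX : Measure.map X ℙ = gammaMeasure (n / 2) (1 / 2))
    (a : ℝ) (ha : 0 ≤ a) :
    ℙ {ω | X ω - n ≥ 2 * Real.sqrt (n * a) + 2 * a} ≤ ENNReal.ofReal (Real.exp (-a)) := by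
  convert chi_square_tail_bound_general (by positivity) one_half_pos hX ha using 4
  ring_nf
end

section
/- Let σ > 0, θ ∈ ℝ, r, r⊥ ∈ ℝ, and set x₀ = r·cos θ + r⊥·sin θ and p₀ = r·sin θ − r⊥·cos θ. Let X' and P' be independent Gaussian random variables with X' ~ N(x₀/√2, 1/2) and P' ~ N(−p₀/√2, 1/2), and define the estimator R̃ = √2 · (σ²/(1+σ²)) · (X'·cos θ − P'·sin θ). Then 𝔼[(R̃ − r)²] = (σ²/(1+σ²))² + r² · (1/(1+σ²))². -/
open MeasureTheory ProbabilityTheory Real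

/-!
Undoing the heterodyne scaling and rotating by `θ` turns the two outcomes into an unbiased estimator
of `r`. Its variance is `2 · 1/2 = 1` for every `θ`, because a rotation preserves isotropic
uncorrelated noise. The Bayes estimator shrinks it by the gain `k = σ² / (1 + σ²)`, so its error has
variance `k²` and bias `-(1 - k) r = -r / (1 + σ²)`.
-/

section MeanSquaredError

variable {Ω : Type*} [MeasurableSpace Ω] {μ : Measure Ω} [IsProbabilityMeasure μ] {Z : Ω → ℝ}

lemma integral_sub_const_sq (hZ : MemLp Z 2 μ) (c : ℝ) :
    ∫ ω, (Z ω - c) ^ 2 ∂μ = Var[Z; μ] + (μ[Z] - c) ^ 2 := by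
  have hvar : Var[fun ω ↦ Z ω - c; μ] =
      ∫ ω, (Z ω - c) ^ 2 ∂μ - (∫ ω, (Z ω - c) ∂μ) ^ 2 :=
    variance_eq_sub (hZ.sub (memLp_const c))
  have hmean : ∫ ω, (Z ω - c) ∂μ = μ[Z] - c := by
    simp [integral_sub (hZ.integrable one_le_two) (integrable_const c)]
  rw [variance_sub_const hZ.aestronglyMeasurable, hmean] at hvar
  linarith

lemma integral_const_mul_sub_integral_sq (hZ : MemLp Z 2 μ) (k : ℝ) :
    ∫ ω, (k * Z ω - μ[Z]) ^ 2 ∂μ = k ^ 2 * Var[Z; μ] + μ[Z] ^ 2 * (1 - k) ^ 2 := by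
  rw [integral_sub_const_sq (hZ.const_mul k), variance_const_mul, integral_const_mul]
  ring

end MeanSquaredError

section GaussianMoments

variable {Ω : Type*} [MeasurableSpace Ω] {μ : Measure Ω} {X : Ω → ℝ} {m : ℝ} {v : NNReal}

lemma hasLaw_gaussianReal_of_map_eq (hX : μ.map X = gaussianReal m v) :
    HasLaw X (gaussianReal m v) μ where
  -- `Measure.map` of a map that is not a.e. measurable is zero, which a Gaussian law is not.
  aemeasurable := .of_map_ne_zero (hX ▸ IsProbabilityMeasure.ne_zero _)
  map_eq := hX

lemma memLp_two_of_map_eq_gaussianReal (hX : μ.map X = gaussianReal m v) : MemLp X 2 μ :=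
  (hasLaw_gaussianReal_of_map_eq hX).hasGaussianLaw.memLp_two

lemma integral_of_map_eq_gaussianReal (hX : μ.map X = gaussianReal m v) : μ[X] = m :=
  (hasLaw_gaussianReal_of_map_eq hX).integral_eq.trans integral_id_gaussianReal

lemma variance_of_map_eq_gaussianReal (hX : μ.map X = gaussianReal m v) : Var[X; μ] = v :=
  (hasLaw_gaussianReal_of_map_eq hX).variance_eq.trans variance_id_gaussianReal

end GaussianMoments

/-- The unbiased estimator of the quadrature `r` along the angle `θ` formed from heterodyne
outcomes `X` and `P`. The factor `√2` undoes the scaling of the outcomes by `1/√2`; the sign of the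
second term accounts for the mean `-p₀/√2` of `P`. -/
noncomputable def quadratureEstimator {Ω : Type*} (θ : ℝ) (X P : Ω → ℝ) (ω : Ω) : ℝ :=
  √2 * (X ω * cos θ - P ω * sin θ)

namespace quadratureEstimator

variable {Ω : Type*} [MeasurableSpace Ω] {μ : Measure Ω} {X P : Ω → ℝ}

lemma memLp {p : ENNReal} (θ : ℝ) (hX : MemLp X p μ) (hP : MemLp P p μ) :
    MemLp (quadratureEstimator θ X P) p μ :=
  ((hX.mul_const (cos θ)).sub (hP.mul_const (sin θ))).const_mul √2

lemma integral_eq {θ r rp : ℝ} (hX : Integrable X μ) (hP : Integrable P μ)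
    (hXmean : μ[X] = (r * cos θ + rp * sin θ) / √2)
    (hPmean : μ[P] = -(r * sin θ - rp * cos θ) / √2) :
    μ[quadratureEstimator θ X P] = r := by
  calc μ[quadratureEstimator θ X P]
      = √2 * (μ[X] * cos θ - μ[P] * sin θ) := by
        simp only [quadratureEstimator]
        rw [integral_const_mul, integral_sub (hX.mul_const _) (hP.mul_const _),
          integral_mul_const, integral_mul_const]
    _ = (r * cos θ + rp * sin θ) * cos θ + (r * sin θ - rp * cos θ) * sin θ := by
        rw [hXmean, hPmean]
        field_simp
        ring
    _ = r := by linear_combination r * sin_sq_add_cos_sq θ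

lemma variance_eq [IsFiniteMeasure μ] {v : ℝ} (θ : ℝ) (hX : MemLp X 2 μ) (hP : MemLp P 2 μ)
    (hXvar : Var[X; μ] = v) (hPvar : Var[P; μ] = v) (hcov : cov[X, P; μ] = 0) :
    Var[quadratureEstimator θ X P; μ] = 2 * v := by
  calc Var[quadratureEstimator θ X P; μ]
      = √2 ^ 2 * Var[fun ω ↦ X ω * cos θ - P ω * sin θ; μ] := variance_const_mul ..
    _ = 2 * (v * cos θ ^ 2 + v * sin θ ^ 2) := by
        rw [variance_fun_sub (hX.mul_const _) (hP.mul_const _), variance_mul_const,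
          variance_mul_const, covariance_mul_const_left, covariance_mul_const_right, hcov, hXvar,
          hPvar, sq_sqrt zero_le_two]
        ring
    _ = 2 * v := by rw [← mul_add, cos_sq_add_sin_sq, mul_one]

end quadratureEstimator

theorem heterodyne_attack_error_general (σ : ℝ) {θ r rp : ℝ}
    {Ω : Type*} [MeasurableSpace Ω] {μ : Measure Ω} [IsProbabilityMeasure μ] {X P : Ω → ℝ}
    (hX : MemLp X 2 μ) (hP : MemLp P 2 μ)
    (hXmean : μ[X] = (r * cos θ + rp * sin θ) / √2)
    (hPmean : μ[P] = -(r * sin θ - rp * cos θ) / √2)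
    (hXvar : Var[X; μ] = 1 / 2) (hPvar : Var[P; μ] = 1 / 2) (hcov : cov[X, P; μ] = 0) :
    ∫ ω, (√2 * (σ ^ 2 / (1 + σ ^ 2)) * (X ω * cos θ - P ω * sin θ) - r) ^ 2 ∂μ =
      (σ ^ 2 / (1 + σ ^ 2)) ^ 2 + r ^ 2 * (1 / (1 + σ ^ 2)) ^ 2 := by
  have hmean : μ[quadratureEstimator θ X P] = r :=
    quadratureEstimator.integral_eq (hX.integrable one_le_two) (hP.integrable one_le_two)
      hXmean hPmean
  have hvar : Var[quadratureEstimator θ X P; μ] = 1 := by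
    rw [quadratureEstimator.variance_eq θ hX hP hXvar hPvar hcov]
    norm_num
  have hgain : 1 - σ ^ 2 / (1 + σ ^ 2) = 1 / (1 + σ ^ 2) := by
    field_simp
    ring
  have herror := integral_const_mul_sub_integral_sq (quadratureEstimator.memLp θ hX hP)
    (σ ^ 2 / (1 + σ ^ 2))
  rw [hmean, hvar, hgain, mul_one] at herror
  simpa only [quadratureEstimator, mul_assoc, mul_left_comm] using herror

/-- Expected squared error of the heterodyne-attack estimator: with independent
heterodyne outcomes `X' ~ N(x₀/√2, 1/2)` and `P' ~ N(−p₀/√2, 1/2)`, where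
`x₀ = r cos θ + r⊥ sin θ` and `p₀ = r sin θ − r⊥ cos θ`, the estimator
`R̃ = √2·(σ²/(1+σ²))·(X' cos θ − P' sin θ)` satisfies
`𝔼[(R̃ − r)²] = (σ²/(1+σ²))² + r²/(1+σ²)²`. -/
theorem heterodyne_attack_error (σ : ℝ) (hσ : 0 < σ) (θ r rp : ℝ)
    (x₀ p₀ : ℝ) (hx₀ : x₀ = r * Real.cos θ + rp * Real.sin θ)
    (hp₀ : p₀ = r * Real.sin θ - rp * Real.cos θ)
    {Ω : Type*} [MeasureSpace Ω] [IsProbabilityMeasure (ℙ : Measure Ω)]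
    (X' P' : Ω → ℝ)
    (hX : Measure.map X' ℙ = gaussianReal (x₀ / Real.sqrt 2) (1 / 2))
    (hP : Measure.map P' ℙ = gaussianReal (-p₀ / Real.sqrt 2) (1 / 2))
    (hindep : IndepFun X' P' ℙ) :
    ∫ ω, (Real.sqrt 2 * (σ ^ 2 / (1 + σ ^ 2)) * (X' ω * Real.cos θ - P' ω * Real.sin θ)
        - r) ^ 2 ∂ℙ =
      (σ ^ 2 / (1 + σ ^ 2)) ^ 2 + r ^ 2 * (1 / (1 + σ ^ 2)) ^ 2 := by
  subst hx₀ hp₀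
  have hX2 := memLp_two_of_map_eq_gaussianReal hX
  have hP2 := memLp_two_of_map_eq_gaussianReal hP
  exact heterodyne_attack_error_general σ hX2 hP2
    (integral_of_map_eq_gaussianReal hX) (integral_of_map_eq_gaussianReal hP)
    (by simp [variance_of_map_eq_gaussianReal hX]) (by simp [variance_of_map_eq_gaussianReal hP])
    (hindep.covariance_eq_zero hX2 hP2)
end
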